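/- Let q ≥ 2 and L ≥ 2 be integers and let C ⊆ [q]^n be a code. If the matrix φ(C)/√((q−1)n) satisfies RIP-2 of order L with constant 1/2, then C is ((1−1/q)·(1−√(1.5/(L−1))), L−1)-list decodable. -/

import Mathlib

open scoped BigOperators

/-- Relative Hamming distance between two strings of length n. -/
noncomputable def relDist {n : ℕ} {A : Type*} (x y : Fin n → A) : ℝ :=
  ({i : Fin n | x i ≠ y i}.ncard : ℝ) / (n : ℝ)

/-- A code C ⊆ A^n is (ρ, L)-list decodable if every Hamming ball of relative
radius (strictly) ρ contains at most L codewords. -/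
def listDecodable {n : ℕ} {A : Type*} (C : Set (Fin n → A)) (ρ L : ℝ) : Prop :=
  ∀ y : Fin n → A, ({c | c ∈ C ∧ relDist c y < ρ}.ncard : ℝ) ≤ L

/-- Simplex encoding of a symbol x ∈ {0,…,q−1}: the vector (ω^{x·α})_{α ∈ {1,…,q−1}}
in ℂ^{q−1}, where ω = e^{2πi/q}. -/
noncomputable def simplexEnc (q : ℕ) (x : ℕ) (α : Fin (q - 1)) : ℂ :=
  Complex.exp (2 * (Real.pi : ℂ) * Complex.I * (x : ℂ) * (((α : ℕ) : ℂ) + 1) / (q : ℂ))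

/-- Coordinatewise extension of the simplex encoding to strings in [q]^n,
giving a vector in ℂ^{(q−1)n}. -/
noncomputable def simplexEncVec (q n : ℕ) (x : Fin n → Fin q) : Fin n × Fin (q - 1) → ℂ :=
  fun p => simplexEnc q (x p.1 : ℕ) p.2

/-- A complex matrix M satisfies RIP-2 of order k with constant δ if for every vector x
with at most k nonzero coordinates, (1−δ)‖x‖₂² ≤ ‖Mx‖₂² ≤ (1+δ)‖x‖₂². -/
def RIP2 {R C : Type*} [Fintype R] [Fintype C] (M : Matrix R C ℂ) (k : ℕ) (δ : ℝ) : Prop :=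
  ∀ x : C → ℂ, ({c | x c ≠ 0}.ncard ≤ k) →
    (1 - δ) * (∑ c, Complex.normSq (x c)) ≤ (∑ r, Complex.normSq (M.mulVec x r)) ∧
    (∑ r, Complex.normSq (M.mulVec x r)) ≤ (1 + δ) * (∑ c, Complex.normSq (x c))

/-!
Codewords close to `y` have simplex encodings that correlate strongly with that of `y`, because
`⟨φ(x), φ(y)⟩ = (q - 1) n - q Δ(x, y)` for the Hamming distance `Δ`. If `L` codewords lie in a
small ball around `y`, then by Cauchy–Schwarz their sum, tested against `φ(y)`, has a large norm,
whereas the upper RIP inequality at the indicator vector of these codewords makes that norm small.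
-/

open Finset
open scoped ComplexConjugate

section ListDecodable

variable {n : ℕ} {A : Type*}

lemma relDist_eq_hammingDist_div [DecidableEq A] (x y : Fin n → A) :
    relDist x y = hammingDist x y / n := by
  simp only [relDist, hammingDist, Set.ncard_eq_toFinset_card', Set.toFinset_ofPred]

variable [Finite A] {C : Set (Fin n → A)}

lemma listDecodable.anti_radius {ρ ρ' L : ℝ} (h : listDecodable C ρ L) (hρ : ρ' ≤ ρ) :
    listDecodable C ρ' L := fun y => by
  have hsub : {c | c ∈ C ∧ relDist c y < ρ'} ⊆ {c | c ∈ C ∧ relDist c y < ρ} :=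
    fun c hc => ⟨hc.1, hc.2.trans_le hρ⟩
  exact (Nat.cast_le.2 (Set.ncard_le_ncard hsub)).trans (h y)

lemma listDecodable_of_exists_le_relDist {ρ : ℝ} {L : ℕ}
    (h : ∀ (y : Fin n → A) (T : Finset C), #T = L → ∃ c ∈ T, ρ ≤ relDist (c : Fin n → A) y) :
    listDecodable C ρ (L - 1) := by
  intro y
  by_contra! hlt
  have hball : {c | c ∈ C ∧ relDist c y < ρ}.ncard =
      {c : C | relDist (c : Fin n → A) y < ρ}.ncard := by
    rw [← Set.ncard_image_of_injective _ Subtype.val_injective]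
    congr 1
    ext c
    simp [and_comm]
  have hL : L ≤ {c : C | relDist (c : Fin n → A) y < ρ}.ncard := by
    rw [hball, sub_lt_iff_lt_add] at hlt
    exact Nat.lt_add_one_iff.1 (by exact_mod_cast hlt)
  obtain ⟨S, hS, hcard⟩ := Set.exists_subset_card_eq hL
  obtain ⟨c, hc, hfar⟩ :=
    h y S.toFinite.toFinset ((Set.ncard_eq_toFinset_card S S.toFinite).symm.trans hcard)
  exact hfar.not_gt (hS (S.toFinite.mem_toFinset.1 hc))

end ListDecodable

lemma sq_norm_sum_mul_conj_le {ι : Type*} (s : Finset ι) (f g : ι → ℂ) :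
    ‖∑ i ∈ s, f i * conj (g i)‖ ^ 2 ≤
      (∑ i ∈ s, Complex.normSq (f i)) * ∑ i ∈ s, Complex.normSq (g i) := by
  simp only [Complex.normSq_eq_norm_sq]
  calc ‖∑ i ∈ s, f i * conj (g i)‖ ^ 2
      ≤ (∑ i ∈ s, ‖f i‖ * ‖g i‖) ^ 2 := by
        gcongr
        exact norm_sum_le_of_le s fun i _ => by rw [norm_mul, RCLike.norm_conj]
    _ ≤ (∑ i ∈ s, ‖f i‖ ^ 2) * ∑ i ∈ s, ‖g i‖ ^ 2 := sum_mul_sq_le_sq_mul_sq s _ _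

section SimplexEncoding

lemma sum_pow_succ_eq_neg_one {R : Type*} [Ring R] [NoZeroDivisors R] {z : R} {q : ℕ}
    (hq : q ≠ 0) (hzq : z ^ q = 1) (hz : z ≠ 1) : ∑ α : Fin (q - 1), z ^ ((α : ℕ) + 1) = -1 := by
  obtain ⟨m, rfl⟩ := Nat.exists_eq_succ_of_ne_zero hq
  have hgeom : ∑ i ∈ range (m + 1), z ^ i = 0 := by
    have := mul_geom_sum z (m + 1)
    rw [hzq, sub_self] at this
    exact (mul_eq_zero.1 this).resolve_left (sub_ne_zero.2 hz)
  rw [sum_range_succ', pow_zero] at hgeom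
  exact (Fin.sum_univ_eq_sum_range (fun i => z ^ (i + 1)) m).trans
    (eq_neg_of_add_eq_zero_left hgeom)

lemma simplexEnc_mul_conj (q x y : ℕ) (α : Fin (q - 1)) :
    simplexEnc q x α * conj (simplexEnc q y α) =
      (Complex.exp (2 * Real.pi * Complex.I / q) ^ ((x : ℤ) - y)) ^ ((α : ℕ) + 1) := by
  rw [simplexEnc, simplexEnc, ← Complex.exp_conj, ← Complex.exp_add, ← Complex.exp_int_mul,
    ← Complex.exp_nat_mul]
  congr 1
  simp only [map_div₀, map_mul, map_add, map_one, map_ofNat, map_natCast, Complex.conj_ofReal,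
    Complex.conj_I]
  push_cast
  ring

variable {q n : ℕ}

lemma sum_simplexEnc_mul_conj (x y : Fin q) :
    ∑ α, simplexEnc q x α * conj (simplexEnc q y α) = if x = y then (q : ℂ) - 1 else -1 := by
  have hq : q ≠ 0 := x.pos.ne'
  have hprim := Complex.isPrimitiveRoot_exp q hq
  simp only [simplexEnc_mul_conj]
  split_ifs with hxy
  · simp [hxy, Nat.cast_pred x.pos]
  · refine sum_pow_succ_eq_neg_one hq ?_ fun hz => hxy ?_
    · rw [← zpow_natCast, zpow_comm, zpow_natCast, hprim.pow_eq_one, one_zpow]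
    · have hdvd : (q : ℤ) ∣ (x : ℤ) - y := (hprim.zpow_eq_one_iff_dvd _).1 hz
      have hmod : (y : ℕ) ≡ x [MOD q] := (Nat.modEq_iff_dvd).2 hdvd
      exact Fin.ext (hmod.symm.eq_of_lt_of_lt x.2 y.2)

lemma sum_simplexEncVec_mul_conj (x y : Fin n → Fin q) :
    ∑ p, simplexEncVec q n x p * conj (simplexEncVec q n y p) =
      ((q : ℂ) - 1) * n - q * hammingDist x y := by
  have hsymbol (i : Fin n) :
      (if x i = y i then (q : ℂ) - 1 else -1) = (q - 1) - q * if x i ≠ y i then 1 else 0 := by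
    split_ifs <;> simp_all
  simp only [simplexEncVec, Fintype.sum_prod_type, sum_simplexEnc_mul_conj, hsymbol]
  rw [sum_sub_distrib, ← mul_sum, sum_boole, sum_const, card_univ, Fintype.card_fin, nsmul_eq_mul,
    mul_comm (n : ℂ), hammingDist]

lemma sum_normSq_simplexEncVec (x : Fin n → Fin q) :
    ∑ p, Complex.normSq (simplexEncVec q n x p) = ((q : ℝ) - 1) * n := by
  have h := sum_simplexEncVec_mul_conj x x
  simp only [Complex.mul_conj, hammingDist_self, Nat.cast_zero, mul_zero, sub_zero] at h
  exact_mod_cast h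

lemma sq_sum_sub_hammingDist_le {ι : Type*} (T : Finset ι) (c : ι → Fin n → Fin q)
    (y : Fin n → Fin q) :
    (∑ i ∈ T, (((q : ℝ) - 1) * n - q * hammingDist (c i) y)) ^ 2 ≤
      (∑ p, Complex.normSq (∑ i ∈ T, simplexEncVec q n (c i) p)) * (((q : ℝ) - 1) * n) := by
  have hinner : ∑ p, (∑ i ∈ T, simplexEncVec q n (c i) p) * conj (simplexEncVec q n y p) =
      ((∑ i ∈ T, (((q : ℝ) - 1) * n - q * hammingDist (c i) y) : ℝ) : ℂ) := by
    simp only [sum_mul]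
    rw [sum_comm]
    simp only [sum_simplexEncVec_mul_conj]
    push_cast
    rfl
  have hCS := sq_norm_sum_mul_conj_le univ (fun p => ∑ i ∈ T, simplexEncVec q n (c i) p)
    (simplexEncVec q n y)
  rwa [hinner, Complex.norm_real, Real.norm_eq_abs, sq_abs, sum_normSq_simplexEncVec] at hCS

lemma mul_lt_sub_hammingDist_of_relDist_lt (hn : 0 < n) {x y : Fin n → Fin q} {t : ℝ}
    (h : relDist x y < (1 - 1 / (q : ℝ)) * (1 - t)) :
    ((q : ℝ) - 1) * n * t < ((q : ℝ) - 1) * n - q * hammingDist x y := by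
  have hq : (0 : ℝ) < q := by exact_mod_cast (y ⟨0, hn⟩).pos
  have hn' : (0 : ℝ) < n := by exact_mod_cast hn
  rw [relDist_eq_hammingDist_div, div_lt_iff₀ hn'] at h
  have hscaled : (q : ℝ) * hammingDist x y < q * ((1 - 1 / (q : ℝ)) * (1 - t) * n) := by gcongr
  have hexpand : (q : ℝ) * ((1 - 1 / (q : ℝ)) * (1 - t) * n) =
      ((q : ℝ) - 1) * n - ((q : ℝ) - 1) * n * t := by
    field_simp
  linarith

lemma exists_le_relDist_of_sum_normSq_le (hn : 0 < n) {ι : Type*} {T : Finset ι}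
    (hT : T.Nonempty) (c : ι → Fin n → Fin q) (y : Fin n → Fin q) {t : ℝ} (ht : 0 ≤ t)
    (h : ∑ p, Complex.normSq (∑ i ∈ T, simplexEncVec q n (c i) p) ≤
      (#T * t) ^ 2 * (((q : ℝ) - 1) * n)) :
    ∃ i ∈ T, (1 - 1 / (q : ℝ)) * (1 - t) ≤ relDist (c i) y := by
  by_contra! hclose
  set N : ℝ := ((q : ℝ) - 1) * n
  have hq : (1 : ℝ) ≤ q := by exact_mod_cast (y ⟨0, hn⟩).pos
  have hN : 0 ≤ N := mul_nonneg (sub_nonneg.2 hq) n.cast_nonneg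
  have hcorr : #T * (N * t) < ∑ i ∈ T, (N - q * hammingDist (c i) y) := by
    rw [← nsmul_eq_mul, ← sum_const]
    exact sum_lt_sum_of_nonempty hT fun i hi =>
      mul_lt_sub_hammingDist_of_relDist_lt hn (hclose i hi)
  have hsq : (#T * (N * t)) ^ 2 < (#T * (N * t)) ^ 2 := calc
    (#T * (N * t)) ^ 2 < (∑ i ∈ T, (N - q * hammingDist (c i) y)) ^ 2 := by gcongr
    _ ≤ (∑ p, Complex.normSq (∑ i ∈ T, simplexEncVec q n (c i) p)) * N :=
      sq_sum_sub_hammingDist_le T c y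
    _ ≤ (#T * t) ^ 2 * N * N := mul_le_mul_of_nonneg_right h hN
    _ = (#T * (N * t)) ^ 2 := by ring
  exact hsq.false

end SimplexEncoding

section UpperRIP

/-- The upper half `‖Mx‖₂² ≤ (1 + δ)‖x‖₂²` of RIP-2 of order `k` with constant `δ`, which
controls the norms of sums of at most `k` columns of `M`. -/
def UpperRIP2 {R C : Type*} [Fintype R] [Fintype C] (M : Matrix R C ℂ) (k : ℕ) (δ : ℝ) : Prop :=
  ∀ x : C → ℂ, {c | x c ≠ 0}.ncard ≤ k →
    ∑ r, Complex.normSq (M.mulVec x r) ≤ (1 + δ) * ∑ c, Complex.normSq (x c)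

variable {R C : Type*} [Fintype R] [Fintype C] {M : Matrix R C ℂ} {k : ℕ} {δ : ℝ}

lemma RIP2.upperRIP2 (h : RIP2 M k δ) : UpperRIP2 M k δ := fun x hx => (h x hx).2

lemma UpperRIP2.sum_normSq_sum_le (h : UpperRIP2 M k δ) {T : Finset C} (hT : #T ≤ k) :
    ∑ r, Complex.normSq (∑ c ∈ T, M r c) ≤ (1 + δ) * #T := by
  classical
  have hsupp : {c | (if c ∈ T then (1 : ℂ) else 0) ≠ 0} = (T : Set C) := by
    ext c
    simp
  have hind := h (fun c => if c ∈ T then 1 else 0) (by rwa [hsupp, Set.ncard_coe_finset])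
  simpa [Matrix.mulVec, dotProduct, apply_ite Complex.normSq] using hind

end UpperRIP

section SimplexMatrix

variable {q n : ℕ}

/-- The normalised encoding matrix `φ(C)/√((q - 1)n)` of a code `C`, whose columns are unit
vectors. -/
noncomputable def simplexMatrix (C : Set (Fin n → Fin q)) : Matrix (Fin n × Fin (q - 1)) C ℂ :=
  fun p c => simplexEncVec q n c p / (√(((q : ℝ) - 1) * n) : ℝ)

lemma sub_one_mul_pos (hq : 2 ≤ q) (hn : 0 < n) : 0 < ((q : ℝ) - 1) * n :=
  mul_pos (sub_pos.2 (by exact_mod_cast hq)) (by exact_mod_cast hn)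

lemma UpperRIP2.sum_normSq_sum_simplexEncVec_le (hq : 2 ≤ q) (hn : 0 < n)
    {C : Set (Fin n → Fin q)} [Fintype C] {k : ℕ} {δ : ℝ} (h : UpperRIP2 (simplexMatrix C) k δ)
    {T : Finset C} (hT : #T ≤ k) :
    ∑ p, Complex.normSq (∑ c ∈ T, simplexEncVec q n c p) ≤
      (1 + δ) * #T * (((q : ℝ) - 1) * n) := by
  have hN : 0 < ((q : ℝ) - 1) * n := sub_one_mul_pos hq hn
  have hsum := h.sum_normSq_sum_le hT
  simp only [simplexMatrix, ← sum_div, Complex.normSq_div, Complex.normSq_ofReal,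
    Real.mul_self_sqrt hN.le] at hsum
  rwa [div_le_iff₀ hN] at hsum

end SimplexMatrix

lemma mul_one_sub_sqrt_div_sub_one_le (q : ℕ) {s L : ℝ} (hs : 0 ≤ s) (hL : 1 < L) :
    (1 - 1 / (q : ℝ)) * (1 - √(s / (L - 1))) ≤ (1 - 1 / (q : ℝ)) * (1 - √(s / L)) := by
  have hq : 0 ≤ 1 - 1 / (q : ℝ) := sub_nonneg.2 (by simpa using Nat.cast_inv_le_one q)
  have hL' : 0 < L - 1 := sub_pos.2 hL
  have hdiv : s / L ≤ s / (L - 1) :=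
    div_le_div_of_nonneg_left hs hL' (sub_le_self L zero_le_one)
  exact mul_le_mul_of_nonneg_left (sub_le_sub_left (Real.sqrt_le_sqrt hdiv) 1) hq

theorem stmt8_general {q L n : ℕ} (hq : 2 ≤ q) (hL : 2 ≤ L) {C : Set (Fin n → Fin q)} [Fintype C]
    {δ : ℝ} (hRIP : UpperRIP2 (simplexMatrix C) L δ) :
    listDecodable C ((1 - 1 / (q : ℝ)) * (1 - √((1 + δ) / L))) ((L : ℝ) - 1) := by
  refine listDecodable_of_exists_le_relDist fun y T hT => ?_
  have hTcard : 1 < #T := by omega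
  have hn : 0 < n := by
    obtain ⟨c, -, c', -, hne⟩ := one_lt_card.1 hTcard
    obtain ⟨i, -⟩ := Function.ne_iff.1 (Subtype.coe_ne_coe.2 hne)
    exact i.pos
  have hL' : (0 : ℝ) < L := by positivity
  have hsqrt : 1 + δ ≤ L * √((1 + δ) / L) ^ 2 := by
    rw [← div_le_iff₀' hL']
    exact (Real.sqrt_le_iff.1 le_rfl).2
  refine exists_le_relDist_of_sum_normSq_le hn (card_pos.1 (by omega)) _ y (Real.sqrt_nonneg _)
    ((hRIP.sum_normSq_sum_simplexEncVec_le hq hn hT.le).trans ?_)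
  rw [hT]
  have hN : 0 ≤ ((q : ℝ) - 1) * n := (sub_one_mul_pos hq hn).le
  calc (1 + δ) * L * (((q : ℝ) - 1) * n)
      ≤ L * √((1 + δ) / L) ^ 2 * L * (((q : ℝ) - 1) * n) := by gcongr
    _ = (L * √((1 + δ) / L)) ^ 2 * (((q : ℝ) - 1) * n) := by ring

/-- If the matrix φ(C)/√((q−1)n) satisfies RIP-2 of order L with constant
1/2, then C is ((1 − 1/q)(1 − √(1.5/(L−1))), L − 1)-list decodable. -/
theorem stmt8 (q L n : ℕ) (hq : 2 ≤ q) (hL : 2 ≤ L)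
    (C : Set (Fin n → Fin q)) [Fintype C]
    (hRIP : RIP2 (fun (p : Fin n × Fin (q - 1)) (c : C) =>
        simplexEncVec q n (c : Fin n → Fin q) p /
          ((Real.sqrt (((q : ℝ) - 1) * n) : ℝ) : ℂ)) L (1 / 2)) :
    listDecodable C
      ((1 - 1 / (q : ℝ)) * (1 - Real.sqrt (1.5 / ((L : ℝ) - 1)))) ((L : ℝ) - 1) := by
  rw [show (1.5 : ℝ) = 1 + 1 / 2 by norm_num]
  exact (stmt8_general hq hL (RIP2.upperRIP2 hRIP)).anti_radius
    (mul_one_sub_sqrt_div_sub_one_le q (by norm_num) (by exact_mod_cast hL))
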